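/- For all coprime integers b, c ≥ 2, the Stoneham number α_{b,c} = ∑_{n≥1} 1/(c^n·b^{c^n}) is transcendental over ℚ. -/

import Mathlib

/-- The Stoneham number `α_{b,c} = ∑_{n≥1} 1/(c^n · b^(c^n))`. -/
noncomputable def stoneham (b c : ℕ) : ℝ :=
  ∑' n : ℕ, 1 / ((c : ℝ) ^ (n + 1) * (b : ℝ) ^ (c ^ (n + 1)))

/-!
Mahler's method. The series `f(z) = ∑_{n≥1} z^(c^n) / a^n` satisfies `f(z^c) = a f(z) - z^c`, and
comparing degrees shows that no rational function solves this equation; a minimal algebraic relation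
would provide such a solution, so `f` is transcendental over the rational functions.

Suppose `β` and `f(β)` are algebraic. Linear algebra gives, for every `N`, a nonzero polynomial
`P(z, y)` over `ℚ` of total degree at most `2 N` such that `P(z, f(z))` vanishes to order `N ^ 2` at
the origin, so that `|P(β^(c^k), f(β^(c^k)))|` is at most a constant times `(|β|^(N^2))^(c^k)`. By
transcendence of `f` these values are nonzero for large `k`. The equation makes the points
`(β^(c^k), f(β^(c^k)))` the orbit of a polynomial map of degree at most `c`, whose heights grow at
most like `H^(c^k)`, so Liouville's inequality bounds the values below by a constant times
`(H^(-2 N))^(c^k)`. For `N` large this is a contradiction.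
-/

open Filter Topology Asymptotics

section Height

open Height MvPolynomial

lemma exists_isHomogeneous_eval_eq {R ι : Type*} [CommSemiring R] {P : MvPolynomial ι R} {N : ℕ}
    (hP : P.totalDegree ≤ N) :
    ∃ Q : MvPolynomial (Option ι) R, Q.IsHomogeneous N ∧
      ∀ x : ι → R, eval (fun o ↦ o.elim 1 x) Q = eval x P := by
  refine ⟨∑ i ∈ Finset.range (P.totalDegree + 1),
    X none ^ (N - i) * rename some (homogeneousComponent i P), ?_, fun x ↦ ?_⟩
  · refine IsHomogeneous.sum _ _ _ fun i hi ↦ ?_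
    have hiN : N - i + i = N := by have := Finset.mem_range.1 hi; omega
    simpa only [hiN] using (isHomogeneous_X_pow (R := R) none (N - i)).mul
      (homogeneousComponent_isHomogeneous i P).rename_isHomogeneous
  · conv_rhs => rw [← sum_homogeneousComponent P]
    simp [eval_rename, Function.comp_def]

section AffineHeight

variable {K ι ι' : Type*} [Field K] [AdmissibleAbsValues K]

/-- The multiplicative height of a point of affine space, that is, the height of the projective
point obtained by adjoining a coordinate `1` (indexed by `none`). -/
noncomputable def affineHeight (x : ι → K) : ℝ :=
  mulHeight fun o : Option ι ↦ o.elim 1 x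

lemma one_le_affineHeight [Finite ι] (x : ι → K) : 1 ≤ affineHeight x :=
  one_le_mulHeight _

lemma mulHeight₁_le_affineHeight [Finite ι] (x : ι → K) (i : ι) :
    mulHeight₁ (x i) ≤ affineHeight x := by
  have : ![x i, 1] = (fun o : Option ι ↦ o.elim 1 x) ∘ ![some i, none] := by
    ext j; fin_cases j <;> rfl
  rw [mulHeight₁_eq_mulHeight, this]
  exact mulHeight_comp_le _ _

lemma exists_affineHeight_eval_le [Finite ι] [Finite ι'] {p : ι' → MvPolynomial ι K} {N : ℕ}
    (hp : ∀ i, (p i).totalDegree ≤ N) :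
    ∃ C > 0, ∀ x : ι → K, affineHeight (fun i ↦ eval x (p i)) ≤ C * affineHeight x ^ N := by
  choose q hq hqp using fun i ↦ exists_isHomogeneous_eval_eq (hp i)
  obtain ⟨C, hC, h⟩ := mulHeight_eval_le' (K := K) (ι' := Option ι')
    (p := fun o ↦ o.elim (X none ^ N) q) (N := N)
    (by rintro (_ | i); exacts [isHomogeneous_X_pow _ _, hq i])
  refine ⟨C, hC, fun x ↦ le_of_eq_of_le ?_ (h fun o ↦ o.elim 1 x)⟩
  unfold affineHeight
  congr 1
  ext (_ | i) <;> simp [hqp]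

end AffineHeight

lemma totalDegree_map_le {R S ι : Type*} [CommSemiring R] [CommSemiring S] (f : R →+* S)
    (P : MvPolynomial ι R) : (map f P).totalDegree ≤ P.totalDegree :=
  Finset.sup_mono (support_map_subset f P)

lemma exists_le_pow_pow_of_le_mul_pow {h : ℕ → ℝ} {C : ℝ} {c : ℕ} (hc : 2 ≤ c)
    (h_one : ∀ k, 1 ≤ h k) (h_succ : ∀ k, h (k + 1) ≤ C * h k ^ c) :
    ∃ H ≥ 1, ∀ k, h k ≤ H ^ c ^ k := by
  have hC₁ : 1 ≤ max C 1 := le_max_right _ _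
  have h_nonneg k : 0 ≤ h k := zero_le_one.trans (h_one k)
  refine ⟨max C 1 * h 0, one_le_mul_of_one_le_of_one_le hC₁ (h_one 0), fun k ↦ ?_⟩
  suffices max C 1 * h k ≤ (max C 1 * h 0) ^ c ^ k from
    (le_mul_of_one_le_left (h_nonneg k) hC₁).trans this
  induction k with
  | zero => simp
  | succ k ih =>
    have := h_nonneg k
    calc max C 1 * h (k + 1) ≤ max C 1 * (max C 1 * h k ^ c) := by
          gcongr
          exact (h_succ k).trans (by gcongr; exact le_max_left _ _)
      _ = max C 1 ^ 2 * h k ^ c := by ring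
      _ ≤ max C 1 ^ c * h k ^ c := by gcongr
      _ = (max C 1 * h k) ^ c := (mul_pow ..).symm
      _ ≤ ((max C 1 * h 0) ^ c ^ k) ^ c := by gcongr
      _ = (max C 1 * h 0) ^ c ^ (k + 1) := by rw [← pow_mul, pow_succ]

lemma exists_affineHeight_iterate_le {K ι : Type*} [Field K] [AdmissibleAbsValues K] [Finite ι]
    {G : ι → MvPolynomial ι K} {c : ℕ} (hc : 2 ≤ c) (hG : ∀ i, (G i).totalDegree ≤ c)
    {x : ℕ → ι → K} (hx : ∀ k i, x (k + 1) i = eval (x k) (G i)) :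
    ∃ H ≥ 1, ∀ k, affineHeight (x k) ≤ H ^ c ^ k := by
  obtain ⟨C, -, hC⟩ := exists_affineHeight_eval_le hG
  refine exists_le_pow_pow_of_le_mul_pow (C := C) hc (fun k ↦ one_le_affineHeight (x k))
    fun k ↦ ?_
  rw [funext (hx k)]
  exact hC (x k)

section NumberField

open NumberField

variable {K : Type*} [Field K] [NumberField K]

lemma norm_embedding_le_mulHeight₁ (φ : K →+* ℂ) (x : K) : ‖φ x‖ ≤ mulHeight₁ x := by
  have one_le (v : InfinitePlace K) : 1 ≤ max (v x) 1 ^ v.mult := one_le_pow₀ (le_max_right _ _)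
  rw [NumberField.mulHeight₁_eq]
  calc ‖φ x‖ = InfinitePlace.mk φ x := (InfinitePlace.apply φ x).symm
    _ ≤ max (InfinitePlace.mk φ x) 1 ^ (InfinitePlace.mk φ).mult :=
      (le_max_left _ _).trans (le_self_pow₀ (le_max_right _ _) InfinitePlace.mult_ne_zero)
    _ ≤ ∏ v : InfinitePlace K, max (v x) 1 ^ v.mult :=
      by simpa using Finset.prod_mono_set_of_one_le one_le (Finset.subset_univ {InfinitePlace.mk φ})
    _ ≤ _ := le_mul_of_one_le_right (Finset.prod_nonneg fun v _ ↦ zero_le_one.trans (one_le v))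
      (one_le_finprod fun _ ↦ le_max_right _ _)

lemma one_le_mulHeight₁_mul_norm_embedding (φ : K →+* ℂ) {x : K} (hx : x ≠ 0) :
    1 ≤ mulHeight₁ x * ‖φ x‖ := by
  have h := norm_embedding_le_mulHeight₁ φ x⁻¹
  rw [map_inv₀, norm_inv, mulHeight₁_inv] at h
  exact (inv_le_iff_one_le_mul₀ (norm_pos_iff.2 ((map_ne_zero φ).2 hx))).1 h

lemma exists_one_le_mul_norm_embedding_eval_iterate {ι : Type*} [Finite ι]
    {G : ι → MvPolynomial ι K} {c : ℕ} (hc : 2 ≤ c) (hG : ∀ i, (G i).totalDegree ≤ c)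
    {x : ℕ → ι → K} (hx : ∀ k i, x (k + 1) i = eval (x k) (G i)) (φ : K →+* ℂ) :
    ∃ H ≥ 1, ∀ {N : ℕ} {P : MvPolynomial ι K}, P.totalDegree ≤ N → ∃ S > 0, ∀ k,
      eval (x k) P ≠ 0 → 1 ≤ S * (H ^ c ^ k) ^ N * ‖φ (eval (x k) P)‖ := by
  obtain ⟨H, hH, hxH⟩ := exists_affineHeight_iterate_le hc hG hx
  refine ⟨H, hH, fun {N P} hP ↦ ?_⟩
  obtain ⟨S, hS, hPS⟩ := exists_affineHeight_eval_le (p := fun _ : Unit ↦ P) fun _ ↦ hP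
  refine ⟨S, hS, fun k hk ↦ (one_le_mulHeight₁_mul_norm_embedding φ hk).trans ?_⟩
  have hx_nonneg : 0 ≤ affineHeight (x k) := zero_le_one.trans (one_le_affineHeight _)
  gcongr
  calc mulHeight₁ (eval (x k) P) ≤ affineHeight fun _ : Unit ↦ eval (x k) P :=
        mulHeight₁_le_affineHeight (fun _ ↦ eval (x k) P) ()
    _ ≤ S * affineHeight (x k) ^ N := hPS (x k)
    _ ≤ S * (H ^ c ^ k) ^ N := by gcongr; exact hxH k

end NumberField

lemma exists_one_le_mul_norm_aeval_iterate {ι : Type*} [Finite ι]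
    {G : ι → MvPolynomial ι ℚ} {c : ℕ} (hc : 2 ≤ c) (hG : ∀ i, (G i).totalDegree ≤ c)
    {w : ℕ → ι → ℂ} (hw₀ : ∀ i, IsAlgebraic ℚ (w 0 i))
    (hw : ∀ k i, w (k + 1) i = aeval (w k) (G i)) :
    ∃ H ≥ 1, ∀ {N : ℕ} {P : MvPolynomial ι ℚ}, P.totalDegree ≤ N → ∃ S > 0, ∀ k,
      aeval (w k) P ≠ 0 → 1 ≤ S * (H ^ c ^ k) ^ N * ‖aeval (w k) P‖ := by
  let K := IntermediateField.adjoin ℚ (Set.range (w 0))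
  have : FiniteDimensional ℚ K := IntermediateField.finiteDimensional_adjoin <| by
    rintro _ ⟨i, rfl⟩
    exact (hw₀ i).isIntegral
  have : NumberField K := ⟨⟩
  let x₀ : ι → K := fun i ↦ ⟨w 0 i, IntermediateField.subset_adjoin ℚ _ ⟨i, rfl⟩⟩
  let x (k : ℕ) : ι → K := (fun y i ↦ aeval y (G i))^[k] x₀
  have eval_map (y : ι → K) (P : MvPolynomial ι ℚ) :
      eval y (P.map (algebraMap ℚ K)) = aeval y P := by
    rw [MvPolynomial.eval_map, aeval_def]
  have hx (k i) : x (k + 1) i = eval (x k) ((G i).map (algebraMap ℚ K)) := by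
    simp only [x, Function.iterate_succ_apply', eval_map]
  have aeval_w (k : ℕ) (P : MvPolynomial ι ℚ) (h : ∀ i, algebraMap K ℂ (x k i) = w k i) :
      algebraMap K ℂ (aeval (x k) P) = aeval (w k) P := by
    rw [← aeval_algebraMap_apply, ← funext h]; rfl
  have hxw (k i) : algebraMap K ℂ (x k i) = w k i := by
    induction k generalizing i with
    | zero => rfl
    | succ k ih => rw [hw, hx, eval_map, aeval_w k _ ih]
  obtain ⟨H, hH, h⟩ := exists_one_le_mul_norm_embedding_eval_iterate hc
    (fun i ↦ (totalDegree_map_le _ _).trans (hG i)) hx (algebraMap K ℂ)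
  refine ⟨H, hH, fun {N P} hP ↦ ?_⟩
  obtain ⟨S, hS, hPS⟩ := h (P := P.map (algebraMap ℚ K)) ((totalDegree_map_le _ _).trans hP)
  refine ⟨S, hS, fun k hk ↦ ?_⟩
  have := hPS k
  rw [eval_map, aeval_w k P (hxw k)] at this
  exact this fun h₀ ↦ hk (by rw [← aeval_w k P (hxw k), h₀, map_zero])

end Height

section AuxiliaryPolynomial

open MvPolynomial
open scoped Polynomial

section LinearAlgebra

variable {k : Type*} [Field k]

lemma exists_ne_zero_X_pow_dvd_sum_smul {ι : Type*} [Fintype ι] (g : ι → k[X]) {M : ℕ}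
    (hM : M < Fintype.card ι) : ∃ a : ι → k, a ≠ 0 ∧ Polynomial.X ^ M ∣ ∑ i, a i • g i := by
  let L : (ι → k) →ₗ[k] (Fin M → k) :=
    LinearMap.pi fun m ↦ Polynomial.lcoeff k m ∘ₗ Fintype.linearCombination k g
  have hL : L.ker ≠ ⊥ := L.ker_ne_bot_of_finrank_lt (by simpa using hM)
  obtain ⟨a, ha, ha_ne⟩ := (Submodule.ne_bot_iff _).1 hL
  refine ⟨a, ha_ne, Polynomial.X_pow_dvd_iff.2 fun m hm ↦ ?_⟩
  simpa [L, Fintype.linearCombination_apply] using congrFun (LinearMap.mem_ker.1 ha) ⟨m, hm⟩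

lemma exists_ne_zero_totalDegree_le_X_pow_dvd_aeval {σ : Type*} [Fintype σ] (t : σ → k[X])
    {N M : ℕ} (hM : M < (N + 1) ^ Fintype.card σ) :
    ∃ P : MvPolynomial σ k, P ≠ 0 ∧ P.totalDegree ≤ Fintype.card σ * N ∧
      Polynomial.X ^ M ∣ aeval t P := by
  classical
  let exponent (e : σ → Fin (N + 1)) : σ →₀ ℕ := Finsupp.equivFunOnFinite.symm fun s ↦ e s
  have exponent_injective : exponent.Injective := fun e₁ e₂ h ↦
    funext fun s ↦ Fin.ext (DFunLike.congr_fun h s)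
  obtain ⟨a, ha, hdvd⟩ := exists_ne_zero_X_pow_dvd_sum_smul
    (fun e ↦ aeval t (monomial (exponent e) (1 : k))) (M := M) (by simpa using hM)
  refine ⟨∑ e, a e • monomial (exponent e) 1, fun h ↦ ha (funext ?_), ?_, by simpa using hdvd⟩
  · have := (basisMonomials σ k).linearIndependent.comp exponent exponent_injective
    exact Fintype.linearIndependent_iff.1 this a (by simpa using h)
  · refine totalDegree_finsetSum_le fun e _ ↦ (totalDegree_smul_le _ _).trans ?_
    refine (totalDegree_monomial_le _ _).trans ?_
    rw [Finsupp.sum_fintype _ _ fun _ ↦ rfl]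
    simpa using Finset.sum_le_card_nsmul Finset.univ (fun s ↦ exponent e s) N
      fun s _ ↦ Nat.lt_succ_iff.1 (e s).is_lt

end LinearAlgebra

section Asymptotics

variable {α σ R 𝕜 : Type*} [CommSemiring R] [NormedField 𝕜] [Algebra R 𝕜] {l : Filter α}
  {u v : α → σ → 𝕜} {g : α → ℝ}

lemma isBigO_one_aeval (hv : ∀ s, (fun x ↦ v x s) =O[l] fun _ ↦ (1 : ℝ)) (P : MvPolynomial σ R) :
    (fun x ↦ aeval (v x) P) =O[l] fun _ ↦ (1 : ℝ) := by
  induction P using MvPolynomial.induction_on with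
  | C r => simpa only [aeval_C] using isBigO_const_const (algebraMap R 𝕜 r) one_ne_zero l
  | add P Q hP hQ => simpa using hP.add hQ
  | mul_X P s hP => simpa only [map_mul, aeval_X, one_mul] using hP.mul (hv s)

lemma isBigO_aeval_sub_aeval (hu : ∀ s, (fun x ↦ u x s) =O[l] fun _ ↦ (1 : ℝ))
    (hv : ∀ s, (fun x ↦ v x s) =O[l] fun _ ↦ (1 : ℝ))
    (huv : ∀ s, (fun x ↦ u x s - v x s) =O[l] g) (P : MvPolynomial σ R) :
    (fun x ↦ aeval (u x) P - aeval (v x) P) =O[l] g := by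
  induction P using MvPolynomial.induction_on with
  | C r => simpa using isBigO_zero g l
  | add P Q hP hQ => simpa [add_sub_add_comm] using hP.add hQ
  | mul_X P s hP =>
    have h₁ := hP.mul (hu s)
    have h₂ := (isBigO_one_aeval hv P).mul (huv s)
    simp only [one_mul, mul_one] at h₁ h₂
    refine (h₁.add h₂).congr_left fun x ↦ ?_
    rw [map_mul, map_mul, aeval_X, aeval_X]
    ring

end Asymptotics

/-- The function `f` has a formal Taylor series at `0` with rational coefficients, encoded by the
polynomials `T` obtained by truncating that series. -/
def HasRationalTaylorSeries (f : ℂ → ℂ) : Prop :=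
  ∀ M : ℕ, ∃ T : ℚ[X], (fun z ↦ f z - Polynomial.aeval z T) =O[𝓝 0] fun z ↦ ‖z‖ ^ M

namespace HasRationalTaylorSeries

variable {f : ℂ → ℂ}

lemma isBigO_one (hf : HasRationalTaylorSeries f) : f =O[𝓝 0] fun _ ↦ (1 : ℝ) := by
  obtain ⟨T, hT⟩ := hf 0
  have hT_one : (fun z : ℂ ↦ Polynomial.aeval z T) =O[𝓝 0] fun _ ↦ (1 : ℝ) :=
    T.continuous_aeval.continuousAt.isBigO_one ℝ
  simpa only [pow_zero, sub_add_cancel] using (hT.congr_right fun _ ↦ pow_zero _).add hT_one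

lemma exists_ne_zero_isBigO_pow (hf : HasRationalTaylorSeries f) (N : ℕ) :
    ∃ P : MvPolynomial (Fin 2) ℚ, P ≠ 0 ∧ P.totalDegree ≤ 2 * N ∧
      (fun z ↦ aeval ![z, f z] P) =O[𝓝 0] fun z ↦ ‖z‖ ^ N ^ 2 := by
  obtain ⟨T, hT⟩ := hf (N ^ 2)
  obtain ⟨P, hP, hPdeg, Q, hQ⟩ := exists_ne_zero_totalDegree_le_X_pow_dvd_aeval
    ![Polynomial.X, T] (show N ^ 2 < (N + 1) ^ Fintype.card (Fin 2) by
      rw [Fintype.card_fin]; gcongr; exact N.lt_succ_self)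
  refine ⟨P, hP, by simpa using hPdeg, ?_⟩
  have id_one : (fun z : ℂ ↦ z) =O[𝓝 0] fun _ ↦ (1 : ℝ) := continuousAt_id.isBigO_one ℝ
  have aeval_one (S : ℚ[X]) : (fun z : ℂ ↦ Polynomial.aeval z S) =O[𝓝 0] fun _ ↦ (1 : ℝ) :=
    S.continuous_aeval.continuousAt.isBigO_one ℝ
  have h_sub : (fun z ↦ aeval ![z, f z] P - aeval ![z, Polynomial.aeval z T] P) =O[𝓝 0]
      fun z ↦ ‖z‖ ^ N ^ 2 := by
    apply isBigO_aeval_sub_aeval <;> intro s <;> fin_cases s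
    exacts [id_one, hf.isBigO_one, id_one, aeval_one T, by simpa using isBigO_zero _ _, hT]
  have h_trunc (z : ℂ) :
      aeval ![z, Polynomial.aeval z T] P = z ^ N ^ 2 * Polynomial.aeval z Q := by
    have h := congrArg (Polynomial.aeval z) hQ
    rw [map_mul, map_pow, Polynomial.aeval_X, comp_aeval_apply] at h
    rw [← h]
    congr 2
    ext s; fin_cases s <;> simp
  have h_dvd : (fun z : ℂ ↦ aeval ![z, Polynomial.aeval z T] P) =O[𝓝 0] fun z ↦ ‖z‖ ^ N ^ 2 := by
    simpa only [h_trunc, norm_pow, mul_one] using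
      (isBigO_refl (fun z : ℂ ↦ z ^ N ^ 2) (𝓝 0)).norm_right.mul (aeval_one Q)
  simpa using h_sub.add h_dvd

end HasRationalTaylorSeries

end AuxiliaryPolynomial

section FunctionTranscendence

open Polynomial
open scoped Polynomial.Bivariate

lemma coeff_comp_C_mul_X_add_C {R : Type*} [CommRing R] {P : R[X]} {m : ℕ}
    (hP : P.natDegree ≤ m + 1) (a b : R) :
    (P.comp (C a * X + C b)).coeff m = (P.coeff m + (m + 1) * P.coeff (m + 1) * b) * a ^ m := by
  have h_comp : P.comp (C a * X + C b) = (taylor b P).comp (C a * X) := by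
    simp [taylor_apply, comp_assoc]
  rw [h_comp, comp_C_mul_X_coeff, taylor_coeff,
    eval_eq_sum_range' (n := 2) (by have := natDegree_hasseDeriv_le P m; omega)]
  simp [Finset.sum_range_succ, hasseDeriv_coeff, add_comm 1 m]

lemma evalEval_equivMvPolynomial_symm {R : Type*} [CommRing R] (x y : R)
    (P : MvPolynomial (Fin 2) R) :
    evalEval x y ((Bivariate.equivMvPolynomial R).symm P) = MvPolynomial.eval ![x, y] P := by
  induction P using MvPolynomial.induction_on with
  | C r => simp
  | add P Q hP hQ => simp [hP, hQ]
  | mul_X P s hP => fin_cases s <;> simp [evalEval, ← hP]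

variable {𝕜 : Type*} [NontriviallyNormedField 𝕜]

/-- The germ of `f` at `0` is transcendental over the field of rational functions: it satisfies no
nontrivial polynomial relation with the coordinate `z`. -/
def IsTranscendentalGerm (f : 𝕜 → 𝕜) : Prop :=
  ∀ P : 𝕜[X][Y], (∀ᶠ z in 𝓝 0, evalEval z (f z) P = 0) → P = 0

lemma IsTranscendentalGerm.eq_zero_of_eventually_aeval_eq_zero {f : 𝕜 → 𝕜}
    (hf : IsTranscendentalGerm f) {R : Type*} [CommRing R] [Algebra R 𝕜] [FaithfulSMul R 𝕜]
    {P : MvPolynomial (Fin 2) R} (hP : ∀ᶠ z in 𝓝 0, MvPolynomial.aeval ![z, f z] P = 0) :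
    P = 0 := by
  refine MvPolynomial.map_injective _ (FaithfulSMul.algebraMap_injective R 𝕜) ?_
  rw [map_zero, ← EmbeddingLike.map_eq_zero_iff (f := (Bivariate.equivMvPolynomial 𝕜).symm)]
  refine hf _ (hP.mono fun z hz ↦ ?_)
  rw [evalEval_equivMvPolynomial_symm, MvPolynomial.eval_map, ← MvPolynomial.aeval_def, hz]

lemma natDegree_ne_zero_of_eventually_evalEval_eq_zero {f : 𝕜 → 𝕜} {P : 𝕜[X][Y]} (hP₀ : P ≠ 0)
    (hP : ∀ᶠ z in 𝓝 0, evalEval z (f z) P = 0) : P.natDegree ≠ 0 := by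
  intro h
  obtain ⟨p, rfl⟩ := natDegree_eq_zero.1 h
  simp only [evalEval_C] at hP
  exact infinite_of_mem_nhds (0 : 𝕜) hP (finite_setOfPred_isRoot (C_ne_zero.1 hP₀))

section MahlerPullback

variable {F : Type*} [Field F] {c : ℕ} {a : F} {r : F[X]}

/-- The pullback `P(z^c, a y + r(z))` of a relation `P(z, y)`: if `f(z^c) = a f(z) + r(z)`, then
`P(z, f z) = 0` implies that the pullback of `P` also vanishes at `(z, f z)`. -/
noncomputable def mahlerPullback (c : ℕ) (a : F) (r : F[X]) (P : F[X][Y]) : F[X][Y] :=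
  (P.map (expand F c : F[X] →+* F[X])).comp (C (C a) * X + C r)

lemma evalEval_mahlerPullback (P : F[X][Y]) (z w : F) :
    evalEval z w (mahlerPullback c a r P) = evalEval (z ^ c) (a * w + r.eval z) P := by
  unfold mahlerPullback
  induction P using Polynomial.induction_on' with
  | add P Q hP hQ => simp [evalEval_add, hP, hQ]
  | monomial n p => simp [evalEval, ← C_mul_X_pow_eq_monomial, expand_eval]

lemma natDegree_mahlerPullback (hc : c ≠ 0) (ha : a ≠ 0) (P : F[X][Y]) :
    (mahlerPullback c a r P).natDegree = P.natDegree := by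
  rw [mahlerPullback, natDegree_comp, natDegree_linear (C_ne_zero.2 ha), mul_one,
    natDegree_map_eq_of_injective (f := (expand F c : F[X] →+* F[X])) (expand_injective hc.pos)]

lemma coeff_mahlerPullback {P : F[X][Y]} {m : ℕ} (hP : P.natDegree ≤ m + 1) :
    (mahlerPullback c a r P).coeff m =
      (expand F c (P.coeff m) + (m + 1) * expand F c (P.coeff (m + 1)) * r) * C a ^ m := by
  rw [mahlerPullback, coeff_comp_C_mul_X_add_C (natDegree_map_le.trans hP)]
  simp only [coeff_map, RingHom.coe_coe]

/-- The rational function `p / q` satisfies the Mahler equation `f(z^c) = a f(z) + r(z)`, written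
without denominators. -/
def IsRationalMahlerSolution (c : ℕ) (a : F) (r p q : F[X]) : Prop :=
  q ≠ 0 ∧ q * expand F c p = C a * expand F c q * p + r * q * expand F c q

lemma exists_isRationalMahlerSolution_of_cancelLeads_eq_zero [CharZero F] (hc : c ≠ 0)
    (ha : a ≠ 0) {P : F[X][Y]} (hP : P.natDegree ≠ 0)
    (h : P.cancelLeads (mahlerPullback c a r P) = 0) :
    ∃ p q : F[X], IsRationalMahlerSolution c a r p q := by
  obtain ⟨m, hm⟩ := Nat.exists_eq_succ_of_ne_zero hP
  have h_lead : P.leadingCoeff = P.coeff (m + 1) := by rw [leadingCoeff, hm]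
  have h_lead_pullback : (mahlerPullback c a r P).leadingCoeff =
      expand F c (P.coeff (m + 1)) * C a ^ (m + 1) := by
    rw [leadingCoeff, natDegree_mahlerPullback hc ha, hm, coeff_mahlerPullback (by omega)]
    simp [coeff_eq_zero_of_natDegree_lt (show P.natDegree < m + 1 + 1 by omega)]
  have h_coeff := congrArg (coeff · m) h
  simp only [cancelLeads, natDegree_mahlerPullback hc ha, tsub_self, pow_zero, mul_one, coeff_sub,
    coeff_C_mul, coeff_zero, h_lead, h_lead_pullback, coeff_mahlerPullback hm.le] at h_coeff
  have h_cast : (m + 1 : F[X]) ≠ 0 := by exact_mod_cast m.succ_ne_zero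
  have hP_lead : P.coeff (m + 1) ≠ 0 := by
    rw [← h_lead, leadingCoeff_ne_zero]; rintro rfl; simp at hP
  refine ⟨-P.coeff m, (m + 1) * P.coeff (m + 1), mul_ne_zero h_cast hP_lead, ?_⟩
  refine mul_right_cancel₀ (pow_ne_zero m (C_ne_zero.2 ha)) ?_
  simp only [map_neg, map_mul, map_add, map_natCast, map_one]
  linear_combination (-(m + 1 : F[X])) * h_coeff

lemma not_isRationalMahlerSolution_neg_X_pow (hc : 2 ≤ c) (ha : a ≠ 0) (p q : F[X]) :
    ¬ IsRationalMahlerSolution c a (-X ^ c) p q := by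
  rintro ⟨hq, h⟩
  obtain ⟨u, rfl⟩ : ∃ u, p = u - X * q := ⟨p + X * q, by ring⟩
  have h_shift : q * expand F c u = C a * (expand F c q * (u - X * q)) := by
    simp only [map_sub, map_mul, expand_X] at h
    linear_combination h
  have hq_expand : expand F c q ≠ 0 := (expand_ne_zero (by omega)).2 hq
  have hu : u ≠ 0 := by
    rintro rfl
    simp [ha, hq, hq_expand] at h_shift
  have hu_expand : expand F c u ≠ 0 := (expand_ne_zero (by omega)).2 hu
  have hu_sub : u - X * q ≠ 0 := by
    intro h₀
    simp [h₀, hq, hu_expand] at h_shift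
  have h_deg : q.natDegree + u.natDegree * c = q.natDegree * c + (u - X * q).natDegree := by
    simpa only [natDegree_mul hq hu_expand, natDegree_C_mul ha, natDegree_mul hq_expand hu_sub,
      natDegree_expand] using congrArg natDegree h_shift
  have hXq : (X * q).natDegree = q.natDegree + 1 := natDegree_X_mul hq
  rcases lt_trichotomy u.natDegree (q.natDegree + 1) with hlt | heq | hgt
  · rw [natDegree_sub_eq_right_of_natDegree_lt (by omega), hXq] at h_deg
    nlinarith
  · have := natDegree_sub_le u (X * q)
    rw [hXq, heq, max_self] at this
    rw [heq] at h_deg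
    nlinarith
  · rw [natDegree_sub_eq_left_of_natDegree_lt (by omega)] at h_deg
    nlinarith

end MahlerPullback

lemma isTranscendentalGerm_of_forall_not_isRationalMahlerSolution [CharZero 𝕜] {f : 𝕜 → 𝕜}
    {c : ℕ} (hc : c ≠ 0) {a : 𝕜} (ha : a ≠ 0) {r : 𝕜[X]}
    (hf : ∀ᶠ z in 𝓝 0, f (z ^ c) = a * f z + r.eval z)
    (h_rat : ∀ p q, ¬ IsRationalMahlerSolution c a r p q) : IsTranscendentalGerm f := by
  by_contra h_alg
  unfold IsTranscendentalGerm at h_alg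
  push Not at h_alg
  obtain ⟨P, ⟨hP, hP₀⟩, hP_min⟩ := exists_minimalFor_of_wellFoundedLT _ natDegree h_alg
  have h_deg := natDegree_ne_zero_of_eventually_evalEval_eq_zero hP₀ hP
  have hQ₀ : P.cancelLeads (mahlerPullback c a r P) ≠ 0 := fun hQ₀ ↦
    have ⟨p, q, hpq⟩ := exists_isRationalMahlerSolution_of_cancelLeads_eq_zero hc ha h_deg hQ₀
    h_rat p q hpq
  have h_lt : (P.cancelLeads (mahlerPullback c a r P)).natDegree < P.natDegree := by
    simpa only [natDegree_mahlerPullback hc ha] using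
      natDegree_cancelLeads_lt_of_natDegree_le_natDegree (p := P) (q := mahlerPullback c a r P)
        (natDegree_mahlerPullback hc ha P).ge ((natDegree_mahlerPullback hc ha P).symm ▸ h_deg.pos)
  refine h_lt.not_ge (hP_min ⟨?_, hQ₀⟩ h_lt.le)
  have h_tendsto : Tendsto (fun z : 𝕜 ↦ z ^ c) (𝓝 0) (𝓝 0) :=
    (continuous_pow c).tendsto' 0 0 (zero_pow hc)
  filter_upwards [hP, h_tendsto.eventually hP, hf] with z hz hzc hfz
  rw [hfz] at hzc
  simp [cancelLeads, evalEval_sub, evalEval_mul, evalEval_mahlerPullback, hz, hzc]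

end FunctionTranscendence

section MahlerMethod

open MvPolynomial

variable {f : ℂ → ℂ} {β : ℂ}

lemma exists_eventually_aeval_ne_zero_and_norm_aeval_le (hf : AnalyticAt ℂ f 0)
    (hf_rat : HasRationalTaylorSeries f) (hf_tr : IsTranscendentalGerm f) (N : ℕ) :
    ∃ P : MvPolynomial (Fin 2) ℚ, P.totalDegree ≤ 2 * N ∧ ∃ C : ℝ, ∀ᶠ z in 𝓝[≠] 0,
      aeval ![z, f z] P ≠ 0 ∧ ‖aeval ![z, f z] P‖ ≤ C * ‖z‖ ^ N ^ 2 := by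
  obtain ⟨P, hP, hP_deg, hP_order⟩ := hf_rat.exists_ne_zero_isBigO_pow N
  obtain ⟨C, hC⟩ := hP_order.bound
  have h_analytic : AnalyticAt ℂ (fun z ↦ aeval ![z, f z] P) 0 :=
    .aeval_mvPolynomial (Fin.forall_fin_two.2 ⟨analyticAt_id, hf⟩) P
  have h_ne_zero : ∀ᶠ z in 𝓝[≠] 0, aeval ![z, f z] P ≠ 0 :=
    h_analytic.eventually_eq_zero_or_eventually_ne_zero.resolve_left
      fun h ↦ hP (hf_tr.eq_zero_of_eventually_aeval_eq_zero h)
  refine ⟨P, hP_deg, C, h_ne_zero.and ?_⟩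
  simpa using hC.filter_mono nhdsWithin_le_nhds

lemma tendsto_pow_pow_nhdsNE_zero {c : ℕ} (hc : 2 ≤ c) (hβ₀ : β ≠ 0) (hβ : ‖β‖ < 1) :
    Tendsto (fun k : ℕ ↦ β ^ c ^ k) atTop (𝓝[≠] 0) :=
  tendsto_nhdsWithin_iff.2 ⟨(tendsto_pow_atTop_nhds_zero_of_norm_lt_one hβ).comp
    (tendsto_pow_atTop_atTop_of_one_lt hc), .of_forall fun _ ↦ pow_ne_zero _ hβ₀⟩

theorem transcendental_of_mahler_equation (hf : AnalyticAt ℂ f 0)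
    (hf_rat : HasRationalTaylorSeries f) (hf_tr : IsTranscendentalGerm f)
    {c : ℕ} (hc : 2 ≤ c) {G : MvPolynomial (Fin 2) ℚ} (hG : G.totalDegree ≤ c)
    (hfG : ∀ z, ‖z‖ < 1 → f (z ^ c) = aeval ![z, f z] G)
    (hβ_alg : IsAlgebraic ℚ β) (hβ₀ : β ≠ 0) (hβ : ‖β‖ < 1) : Transcendental ℚ (f β) := by
  intro h_alg
  let w (k : ℕ) : Fin 2 → ℂ := ![β ^ c ^ k, f (β ^ c ^ k)]
  have h_norm (k : ℕ) : ‖β ^ c ^ k‖ < 1 := by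
    rw [norm_pow]
    exact pow_lt_one₀ (norm_nonneg _) hβ (by positivity)
  obtain ⟨H, hH, h_liouville⟩ := exists_one_le_mul_norm_aeval_iterate
    (G := ![X 0 ^ c, G]) (w := w) hc
    (by simp [Fin.forall_fin_two, hG, totalDegree_X_pow])
    (by simp [Fin.forall_fin_two, w, hβ_alg, h_alg])
    (by simp [Fin.forall_fin_two, w, pow_succ, pow_mul, hfG _ (h_norm _)])
  obtain ⟨N, hN⟩ : ∃ N : ℕ, ‖β‖ ^ N < (H ^ 2)⁻¹ :=
    exists_pow_lt_of_lt_one (by positivity) hβ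
  have hN₀ : N ≠ 0 := by
    rintro rfl
    exact hN.not_ge (by simpa using inv_le_one_of_one_le₀ (one_le_pow₀ hH))
  obtain ⟨P, hP_deg, C, hC⟩ :=
    exists_eventually_aeval_ne_zero_and_norm_aeval_le hf hf_rat hf_tr N
  obtain ⟨S, hS, h_lower⟩ := h_liouville hP_deg
  let ρ : ℝ := (H ^ 2 * ‖β‖ ^ N) ^ N
  have hρ : ρ < 1 := pow_lt_one₀ (by positivity) ((lt_inv_mul_iff₀ (by positivity)).1
    (by simpa using hN)) hN₀
  have h_le : ∀ᶠ k in atTop, 1 ≤ S * C * ρ ^ c ^ k := by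
    filter_upwards [(tendsto_pow_pow_nhdsNE_zero hc hβ₀ hβ).eventually hC] with k ⟨h_ne, h_upper⟩
    calc 1 ≤ S * (H ^ c ^ k) ^ (2 * N) * ‖aeval (w k) P‖ := h_lower k h_ne
      _ ≤ S * (H ^ c ^ k) ^ (2 * N) * (C * ‖β ^ c ^ k‖ ^ N ^ 2) := by gcongr
      _ = S * C * ρ ^ c ^ k := by rw [norm_pow]; ring
  have h_lim : Tendsto (fun k : ℕ ↦ S * C * ρ ^ c ^ k) atTop (𝓝 (S * C * 0)) :=
    ((tendsto_pow_atTop_nhds_zero_of_lt_one (by positivity) hρ).comp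
      (tendsto_pow_atTop_atTop_of_one_lt hc)).const_mul _
  exact absurd (ge_of_tendsto h_lim h_le) (by simp)

end MahlerMethod

section MahlerSeries

open Polynomial

variable {c : ℕ} {a z : ℂ}

/-- The series `∑_{n≥1} z^(c^n) / a^n`, convergent on the open unit disc for `a ≠ 0` and `c ≥ 2`.
Its value at `z = 1 / b` for `a = c` is the Stoneham number `α_{b,c}`. -/
noncomputable def mahlerSeries (c : ℕ) (a z : ℂ) : ℂ :=
  ∑' n : ℕ, z ^ c ^ (n + 1) / a ^ (n + 1)

lemma ofReal_stoneham (b c : ℕ) : (stoneham b c : ℂ) = mahlerSeries c c (b : ℂ)⁻¹ := by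
  rw [stoneham, mahlerSeries, Complex.ofReal_tsum]
  refine tsum_congr fun n ↦ ?_
  push_cast
  rw [inv_pow, one_div, mul_inv_rev, div_eq_mul_inv]

lemma transcendental_stoneham_iff {b c : ℕ} :
    Transcendental ℚ (stoneham b c) ↔ Transcendental ℚ (mahlerSeries c (c : ℚ) (b : ℂ)⁻¹) := by
  rw [Rat.cast_natCast, ← ofReal_stoneham]
  exact (transcendental_algebraMap_iff Complex.ofReal_injective).symm

lemma mahlerSeries_zero (hc : c ≠ 0) : mahlerSeries c a 0 = 0 := by
  simp [mahlerSeries, hc]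

lemma summable_pow_pow_div_pow {r t : ℝ} (hc : 2 ≤ c) (hr₀ : 0 ≤ r) (hr : r < 1) (ht : 0 < t) :
    Summable fun n : ℕ ↦ r ^ c ^ (n + 1) / t ^ (n + 1) := by
  have h_lim : Tendsto (fun n : ℕ ↦ r ^ c ^ (n + 1)) atTop (𝓝 0) :=
    (tendsto_pow_atTop_nhds_zero_of_lt_one hr₀ hr).comp <|
      (tendsto_pow_atTop_atTop_of_one_lt hc).comp (tendsto_add_atTop_nat 1)
  refine summable_of_ratio_norm_eventually_le (r := 1 / 2) (by norm_num) ?_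
  filter_upwards [h_lim.eventually_le_const (half_pos ht)] with n hn
  rw [Real.norm_of_nonneg (by positivity), Real.norm_of_nonneg (by positivity)]
  have h_exp : c ^ (n + 1) + c ^ (n + 1) ≤ c ^ (n + 1 + 1) := by
    rw [← mul_two, pow_succ _ (n + 1)]
    gcongr
  calc r ^ c ^ (n + 1 + 1) / t ^ (n + 1 + 1)
      ≤ r ^ (c ^ (n + 1) + c ^ (n + 1)) / t ^ (n + 1 + 1) := by
        gcongr ?_ / _
        exact pow_le_pow_of_le_one hr₀ hr.le h_exp
    _ = r ^ c ^ (n + 1) / t * (r ^ c ^ (n + 1) / t ^ (n + 1)) := by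
        rw [pow_add, pow_succ t, div_mul_div_comm, mul_comm t]
    _ ≤ 1 / 2 * (r ^ c ^ (n + 1) / t ^ (n + 1)) := by
        gcongr ?_ * _
        rwa [div_le_iff₀ ht, one_div_mul_eq_div]

lemma mahlerSeries_pow (hc : 2 ≤ c) (ha : a ≠ 0) (hz : ‖z‖ < 1) :
    mahlerSeries c a (z ^ c) = a * mahlerSeries c a z - z ^ c := by
  have h_summable : Summable fun n : ℕ ↦ z ^ c ^ (n + 1) / a ^ (n + 1) :=
    .of_norm <| by simpa using summable_pow_pow_div_pow hc (norm_nonneg z) hz (norm_pos_iff.2 ha)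
  rw [mahlerSeries, mahlerSeries, h_summable.tsum_eq_zero_add, mul_add, ← tsum_mul_left, zero_add,
    pow_one, pow_one, mul_div_cancel₀ _ ha, add_sub_cancel_left]
  refine tsum_congr fun n ↦ ?_
  rw [← pow_mul, ← pow_succ', pow_succ' a (n + 1), ← mul_div_assoc, mul_div_mul_left _ _ ha]

lemma analyticAt_mahlerSeries (hc : 2 ≤ c) (ha : a ≠ 0) : AnalyticAt ℂ (mahlerSeries c a) 0 := by
  have h_diff : DifferentiableOn ℂ (mahlerSeries c a) (Metric.ball 0 (1 / 2)) := by
    refine Complex.differentiableOn_tsum_of_summable_norm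
      (summable_pow_pow_div_pow hc (r := 1 / 2) (by norm_num) (by norm_num) (norm_pos_iff.2 ha))
      (by fun_prop) Metric.isOpen_ball fun n z hz ↦ ?_
    rw [norm_div, norm_pow, norm_pow]
    gcongr
    exact (mem_ball_zero_iff.1 hz).le
  exact h_diff.analyticAt (Metric.ball_mem_nhds 0 (by norm_num))

lemma isTranscendentalGerm_mahlerSeries (hc : 2 ≤ c) (ha : a ≠ 0) :
    IsTranscendentalGerm (mahlerSeries c a) := by
  refine isTranscendentalGerm_of_forall_not_isRationalMahlerSolution (r := -X ^ c) (by omega) ha ?_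
    (not_isRationalMahlerSolution_neg_X_pow hc ha)
  filter_upwards [Metric.ball_mem_nhds (0 : ℂ) one_pos] with z hz
  simp [mahlerSeries_pow hc ha (mem_ball_zero_iff.1 hz), sub_eq_add_neg]

lemma isBigO_sub_aeval_of_mahler_equation {f : ℂ → ℂ} (hc : c ≠ 0) {a : ℚ} (ha : a ≠ 0)
    {r : ℚ[X]} (hfr : ∀ᶠ z in 𝓝 0, f (z ^ c) = a * f z + aeval z r) {M : ℕ} {T : ℚ[X]}
    (hT : (fun z ↦ f z - aeval z T) =O[𝓝 0] fun z ↦ ‖z‖ ^ M) :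
    (fun z ↦ f z - aeval z (C a⁻¹ * (expand ℚ c T - r))) =O[𝓝 0] fun z ↦ ‖z‖ ^ (c * M) := by
  have h_tendsto : Tendsto (fun z : ℂ ↦ z ^ c) (𝓝 0) (𝓝 0) :=
    (continuous_pow c).tendsto' 0 0 (zero_pow hc)
  refine ((hT.comp_tendsto h_tendsto).const_mul_left (a : ℂ)⁻¹).congr' ?_ ?_
  · filter_upwards [hfr] with z hz
    have ha' : (a : ℂ) ≠ 0 := Rat.cast_ne_zero.2 ha
    simp only [Function.comp_apply, hz, map_mul, map_sub, expand_aeval, aeval_C, eq_ratCast,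
      Rat.cast_inv]
    field_simp
    ring
  · exact .of_forall fun z ↦ by simp [pow_mul]

lemma hasRationalTaylorSeries_of_mahler_equation {f : ℂ → ℂ} (hf : DifferentiableAt ℂ f 0) {y : ℚ}
    (hf₀ : f 0 = y) (hc : 2 ≤ c) {a : ℚ} (ha : a ≠ 0) {r : ℚ[X]}
    (hfr : ∀ᶠ z in 𝓝 0, f (z ^ c) = a * f z + aeval z r) : HasRationalTaylorSeries f := by
  have h_pow (k : ℕ) : ∃ T : ℚ[X], (fun z ↦ f z - aeval z T) =O[𝓝 0] fun z ↦ ‖z‖ ^ c ^ k := by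
    induction k with
    | zero => exact ⟨C y, by simpa [hf₀] using hf.isBigO_sub.norm_right⟩
    | succ k ih =>
      obtain ⟨T, hT⟩ := ih
      rw [pow_succ']
      exact ⟨_, isBigO_sub_aeval_of_mahler_equation (by omega) ha hfr hT⟩
  exact fun M ↦ (h_pow M).imp fun T hT ↦
    hT.trans (isLittleO_norm_pow_norm_pow (Nat.lt_pow_self hc)).isBigO

lemma hasRationalTaylorSeries_mahlerSeries (hc : 2 ≤ c) {a : ℚ} (ha : a ≠ 0) :
    HasRationalTaylorSeries (mahlerSeries c a) := by
  have ha' : (a : ℂ) ≠ 0 := Rat.cast_ne_zero.2 ha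
  refine hasRationalTaylorSeries_of_mahler_equation (y := 0) (r := -X ^ c)
    (analyticAt_mahlerSeries hc ha').differentiableAt ?_ hc ha ?_
  · rw [mahlerSeries_zero (by omega), Rat.cast_zero]
  · filter_upwards [Metric.ball_mem_nhds (0 : ℂ) one_pos] with z hz
    simp [mahlerSeries_pow hc ha' (mem_ball_zero_iff.1 hz), sub_eq_add_neg]

end MahlerSeries

open MvPolynomial in
theorem stmt18_general {c : ℕ} (hc : 2 ≤ c) {a : ℚ} (ha : a ≠ 0) {β : ℂ}
    (hβ_alg : IsAlgebraic ℚ β) (hβ₀ : β ≠ 0) (hβ : ‖β‖ < 1) :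
    Transcendental ℚ (mahlerSeries c a β) := by
  have ha' : (a : ℂ) ≠ 0 := Rat.cast_ne_zero.2 ha
  have h_deg : (C a * X 1 - X 0 ^ c : MvPolynomial (Fin 2) ℚ).totalDegree ≤ c := by
    refine (totalDegree_sub _ _).trans (max_le ?_ (totalDegree_X_pow _ _).le)
    exact (totalDegree_mul _ _).trans (by rw [totalDegree_C, totalDegree_X]; omega)
  exact transcendental_of_mahler_equation (analyticAt_mahlerSeries hc ha')
    (hasRationalTaylorSeries_mahlerSeries hc ha) (isTranscendentalGerm_mahlerSeries hc ha') hc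
    h_deg (fun z hz ↦ by simp [mahlerSeries_pow hc ha' hz]) hβ_alg hβ₀ hβ

theorem stmt18 (b c : ℕ) (hb : 2 ≤ b) (hc : 2 ≤ c) (hbc : Nat.Coprime b c) :
    Transcendental ℚ (stoneham b c) := by
  have h_norm : ‖(b : ℂ)⁻¹‖ < 1 := by simpa using inv_lt_one_of_one_lt₀ (Nat.one_lt_cast.2 hb)
  exact transcendental_stoneham_iff.2 <| stmt18_general hc (Nat.cast_ne_zero.2 (by omega))
    (isAlgebraic_natCast b).inv (inv_ne_zero (Nat.cast_ne_zero.2 (by omega))) h_norm
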